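/- Let G = (V,E) be a finite connected simple graph and fix a vertex i of G. Then the Möbius invariant μ(G) equals the number of acyclic orientations o of G such that for every vertex j there is a directed path in o from i to j. -/

import Mathlib

open Finset

attribute [local instance] Classical.propDecidable
attribute [local instance] Fintype.toLocallyFiniteOrder

variable {V : Type*} [Fintype V]

noncomputable instance : Fintype (Setoid V) :=
  Fintype.ofInjective (fun s : Setoid V => s.r) fun s t h => by
    cases s; cases t; simp only at h; subst h; rfl

/-- The lattice `L(G)` of partitions of the vertex set of `G` (encoded as setoids, i.e.
equivalence relations, ordered by refinement) all of whose blocks induce connected subgraphs. -/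
def ConnPartition (G : SimpleGraph V) : Type _ :=
  {s : Setoid V // ∀ B ∈ s.classes, (G.induce B).Connected}

instance (G : SimpleGraph V) : PartialOrder (ConnPartition G) :=
  Subtype.partialOrder _

noncomputable instance (G : SimpleGraph V) : Fintype (ConnPartition G) :=
  Subtype.fintype _

/-- The Möbius invariant `μ(G)`: the absolute value of `μ(0̂, 1̂)` in the lattice of connected
partitions of `G`, where `0̂` is the partition into singletons and `1̂` the one-block partition
(defined to be `0` in the degenerate case where `0̂` or `1̂` does not lie in the lattice). -/
noncomputable def mobiusInvariant (G : SimpleGraph V) : ℤ :=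
  if h : (∀ B ∈ (⊥ : Setoid V).classes, (G.induce B).Connected) ∧
      (∀ B ∈ (⊤ : Setoid V).classes, (G.induce B).Connected) then
    |IncidenceAlgebra.mu ℤ (⟨⊥, h.1⟩ : ConnPartition G) ⟨⊤, h.2⟩|
  else 0

/-!
Let `R` be a transversal of the blocks of a connected partition `σ`, and let `G_σ` be the graph of
the edges of `G` inside the blocks of `σ`. Then `μ(⊥, σ)` is, up to the sign `(-1) ^ |V \ R|`, the
number of acyclic orientations of `G_σ` in which every vertex can be reached from `R`, because both
sides satisfy the same recursion. Take an edge `rs` of `G_σ` with `r ∈ R`.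

* Applied to the closure operator that merges the blocks of `r` and `s`, Crapo's closure theorem
  expresses `μ(⊥, σ)` as `-∑ μ(⊥, π)` over the partitions `π` that arise from `σ` by splitting the
  block of `r` and `s` into two connected parts separating them; `R ∪ {s}` is a transversal of `π`.
* Given an orientation, let `C` be the set of vertices reachable from `s`. By acyclicity `C` misses
  `R`, and every edge between `C` and its complement points into `C`. Deleting these edges leaves an
  arbitrary acyclic orientation, with every vertex reachable from `R ∪ {s}`, of `G_π` for the
  partition `π` that splits `C` off from its block.

The theorem is the case `σ = ⊤`, `R = {i}`.
-/

section Moebius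

variable {𝕜 P : Type*} [AddCommGroup 𝕜] [One 𝕜] [PartialOrder P] [LocallyFiniteOrder P]
  [DecidableEq P]

-- Sorting the sum of `μ a x` over `x ∈ [a, y]` by the value `z` of the closure of `x` leaves only
-- `z = y`, by induction on `y`.
theorem sum_mu_filter_closure_eq_zero (c : ClosureOperator P) {a : P} (ha : ¬ c.IsClosed a)
    (y : P) : ∑ x ∈ Icc a y with c x = y, IncidenceAlgebra.mu 𝕜 a x = 0 := by
  induction hn : #(Icc a y) using Nat.strong_induction_on generalizing y with
  | _ n ih =>
    by_cases hy : c.IsClosed y ∧ a ≤ y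
    swap
    · refine sum_eq_zero fun x hx => (hy ?_).elim
      obtain ⟨hx, rfl⟩ := mem_filter.1 hx
      exact ⟨c.isClosed_closure x, (mem_Icc.1 hx).1.trans (c.le_closure x)⟩
    obtain ⟨hy, hay⟩ := hy
    have hmaps : ∀ x ∈ Icc a y, c x ∈ Icc a y := fun x hx =>
      mem_Icc.2 ⟨(mem_Icc.1 hx).1.trans (c.le_closure x), c.closure_min (mem_Icc.1 hx).2 hy⟩
    have hsmaller : ∀ z ∈ Icc a y, z ≠ y →
        ∑ x ∈ Icc a y with c x = z, IncidenceAlgebra.mu 𝕜 a x = 0 := by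
      intro z hz hzy
      have hlt : z < y := lt_of_le_of_ne (mem_Icc.1 hz).2 hzy
      have hfilter : {x ∈ Icc a y | c x = z} = {x ∈ Icc a z | c x = z} := by
        ext x
        simp only [mem_filter, mem_Icc, and_congr_left_iff, and_congr_right_iff]
        rintro rfl -
        exact iff_of_true ((c.le_closure x).trans hlt.le) (c.le_closure x)
      rw [hfilter]
      exact ih _ (hn ▸ card_lt_card (Icc_ssubset_Icc_right hay le_rfl hlt)) z rfl
    rw [← sum_eq_single_of_mem y (right_mem_Icc.2 hay) hsmaller,
      sum_fiberwise_of_maps_to hmaps, IncidenceAlgebra.sum_Icc_mu_right, if_neg]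
    rintro rfl
    exact ha hy

theorem mu_eq_neg_sum_filter_closure (c : ClosureOperator P) {a y : P} (ha : ¬ c.IsClosed a)
    (hy : c.IsClosed y) (hay : a ≤ y) :
    IncidenceAlgebra.mu 𝕜 a y = -∑ x ∈ Ico a y with c x = y, IncidenceAlgebra.mu 𝕜 a x := by
  have hsum := sum_mu_filter_closure_eq_zero (𝕜 := 𝕜) c ha y
  rw [← Ico_insert_right hay, filter_insert, if_pos hy.closure_eq, sum_insert (by simp)] at hsum
  exact eq_neg_of_add_eq_zero_left hsum

end Moebius

section Blocks

variable {α : Type*} {π σ : Setoid α} {r s : α}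

/-- The partition obtained from `π` by merging the blocks of `r` and `s`. -/
def mergeBlocks (π : Setoid α) (r s : α) : Setoid α where
  r u v := π u v ∨ (π r u ∨ π s u) ∧ (π r v ∨ π s v)
  iseqv := by
    have htrans : ∀ {u v}, π r u ∨ π s u → π u v → π r v ∨ π s v := fun hu huv =>
      hu.imp (π.trans' · huv) (π.trans' · huv)
    refine ⟨fun u => .inl (π.refl' u), fun h => h.imp π.symm' And.symm, ?_⟩
    rintro u v w (huv | ⟨hu, hv⟩) (hvw | ⟨hv', hw⟩)
    · exact .inl (π.trans' huv hvw)
    · exact .inr ⟨htrans hv' (π.symm' huv), hw⟩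
    · exact .inr ⟨hu, htrans hv hvw⟩
    · exact .inr ⟨hu, hw⟩

lemma le_mergeBlocks (π : Setoid α) (r s : α) : π ≤ mergeBlocks π r s := fun _ _ => .inl

lemma mergeBlocks_rel (π : Setoid α) (r s : α) : mergeBlocks π r s r s :=
  .inr ⟨.inl (π.refl' r), .inr (π.refl' s)⟩

lemma mergeBlocks_le (h : π ≤ σ) (hrs : σ r s) : mergeBlocks π r s ≤ σ := by
  have hrel : ∀ {w}, π r w ∨ π s w → σ r w := fun hw =>
    hw.elim (fun hr => h hr) fun hs => σ.trans' hrs (h hs)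
  rintro u v (huv | ⟨hu, hv⟩)
  · exact h huv
  · exact σ.trans' (σ.symm' (hrel hu)) (hrel hv)

/-- The partition of the vertices into a set `C` and its complement. -/
def cutSetoid (C : Set α) : Setoid α where
  r u v := u ∈ C ↔ v ∈ C
  iseqv := ⟨fun _ => Iff.rfl, Iff.symm, Iff.trans⟩

lemma mergeBlocks_inf_cutSetoid (π : Setoid α) (r s : α) :
    mergeBlocks π r s ⊓ cutSetoid {v | π s v} = π := by
  refine le_antisymm ?_ fun u v huv => ⟨.inl huv, (π.trans' · huv), (π.trans' · (π.symm' huv))⟩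
  rintro u v ⟨huv | ⟨hu, hv⟩, hcut : π s u ↔ π s v⟩
  · exact huv
  by_cases hsu : π s u
  · exact π.trans' (π.symm' hsu) (hcut.1 hsu)
  · exact π.trans' (π.symm' (hu.resolve_right hsu)) (hv.resolve_right (mt hcut.2 hsu))

lemma mergeBlocks_of_inf_cutSetoid {C : Set α} (hrs : σ r s) (hs : s ∈ C) (hr : r ∉ C)
    (hC : ∀ v ∈ C, σ s v) : mergeBlocks (σ ⊓ cutSetoid C) r s = σ := by
  refine le_antisymm (mergeBlocks_le inf_le_left hrs) fun u v huv => ?_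
  have hblock : ∀ {w}, σ r w → (σ ⊓ cutSetoid C) r w ∨ (σ ⊓ cutSetoid C) s w := by
    intro w hw
    by_cases hwC : w ∈ C
    · exact .inr ⟨hC w hwC, iff_of_true hs hwC⟩
    · exact .inl ⟨hw, iff_of_false hr hwC⟩
  by_cases hru : σ r u
  · exact .inr ⟨hblock hru, hblock (σ.trans' hru huv)⟩
  · have hnotMem : ∀ {w}, σ u w → w ∉ C := fun huw hw =>
      hru (σ.trans' hrs (σ.trans' (hC _ hw) (σ.symm' huw)))
    exact .inl ⟨huv, iff_of_false (hnotMem (σ.refl' u)) (hnotMem huv)⟩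

/-- `R` contains exactly one element of each block of `π`. -/
def IsTransversal (π : Setoid α) (R : Set α) : Prop :=
  ∀ v, ∃! r, r ∈ R ∧ π r v

namespace IsTransversal

variable {R : Set α}

lemma eq_of_rel (hR : IsTransversal π R) (hr : r ∈ R) (hs : s ∈ R) (hrs : π r s) : r = s :=
  (hR s).unique ⟨hr, hrs⟩ ⟨hs, π.refl' s⟩

lemma eq_univ_of_bot (hR : IsTransversal ⊥ R) : R = Set.univ :=
  Set.eq_univ_of_forall fun v => by
    obtain ⟨r, ⟨hr, rfl⟩, -⟩ := hR v
    exact hr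

lemma top_singleton (a : α) : IsTransversal ⊤ {a} :=
  fun _ => ⟨a, ⟨rfl, trivial⟩, fun _ h => h.1⟩

lemma insert_of_mergeBlocks (hR : IsTransversal (mergeBlocks π r s) R) (hr : r ∈ R)
    (hrs : ¬ π r s) : IsTransversal π (insert s R) := by
  have heq : ∀ {t}, t ∈ R → π r t ∨ π s t → r = t := fun ht h =>
    hR.eq_of_rel hr ht (.inr ⟨.inl (π.refl' r), h⟩)
  intro v
  by_cases hsv : π s v
  · refine ⟨s, ⟨Set.mem_insert s R, hsv⟩, ?_⟩
    rintro t ⟨rfl | ht, htv⟩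
    · rfl
    · have hst : π s t := π.trans' hsv (π.symm' htv)
      exact (hrs (heq ht (.inr hst) ▸ π.symm' hst)).elim
  · obtain ⟨t, ⟨ht, htv⟩, huniq⟩ := hR v
    have htv' : π t v := by
      obtain htv | ⟨hrt, hv⟩ := htv
      · exact htv
      · exact heq ht hrt ▸ hv.resolve_right hsv
    refine ⟨t, ⟨.inr ht, htv'⟩, ?_⟩
    rintro t' ⟨rfl | ht', htv'⟩
    · exact (hsv htv').elim
    · exact huniq t' ⟨ht', .inl htv'⟩

end IsTransversal

end Blocks

section WithinBlocks

variable {α : Type*} {G : SimpleGraph α} {π σ : Setoid α}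

/-- The subgraph of `G` formed by the edges inside the blocks of `π`. -/
def withinBlocks (G : SimpleGraph α) (π : Setoid α) : SimpleGraph α where
  Adj u v := G.Adj u v ∧ π u v
  symm := ⟨fun _ _ h => ⟨h.1.symm, π.symm' h.2⟩⟩
  loopless := ⟨fun _ h => h.1.ne rfl⟩

lemma withinBlocks_mono (h : π ≤ σ) : withinBlocks G π ≤ withinBlocks G σ :=
  fun _ _ huv => ⟨huv.1, h huv.2⟩

lemma withinBlocks_withinBlocks (G : SimpleGraph α) (π σ : Setoid α) :
    withinBlocks (withinBlocks G π) σ = withinBlocks G (π ⊓ σ) := by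
  ext u v
  exact and_assoc

lemma withinBlocks_bot (G : SimpleGraph α) : withinBlocks G ⊥ = ⊥ := by
  ext u v
  exact iff_of_false (fun h => h.1.ne h.2) id

lemma withinBlocks_top (G : SimpleGraph α) : withinBlocks G ⊤ = G := by
  ext u v
  exact and_iff_left trivial

lemma rel_of_reachable_withinBlocks {u v : α} (h : (withinBlocks G π).Reachable u v) : π u v := by
  obtain ⟨p⟩ := h
  induction p with
  | nil => exact π.refl' _
  | cons huv _ ih => exact π.trans' huv.2 ih

lemma forall_classes_induce_connected_iff :
    (∀ B ∈ π.classes, (G.induce B).Connected) ↔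
      ∀ u v, π u v → (withinBlocks G π).Reachable u v := by
  constructor
  · intro h u v huv
    let toWithinBlocks : G.induce {x | π x v} →g withinBlocks G π :=
      ⟨Subtype.val, fun {a b} hab => ⟨hab, π.trans' a.2 (π.symm' b.2)⟩⟩
    exact ((h _ (π.mem_classes v)).preconnected ⟨u, huv⟩ ⟨v, π.refl' v⟩).map toWithinBlocks
  · rintro h B ⟨y, rfl⟩
    have hwalk : ∀ {u v : α} (_ : (withinBlocks G π).Walk u v) (hu : π u y) (hv : π v y),
        (G.induce {x | π x y}).Reachable ⟨u, hu⟩ ⟨v, hv⟩ := by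
      intro u v p
      induction p with
      | nil => exact fun _ _ => .refl _
      | cons huv _ ih =>
        intro hu hw
        have hadj : (G.induce {x | π x y}).Adj ⟨_, hu⟩ ⟨_, π.trans' (π.symm' huv.2) hu⟩ := huv.1
        exact hadj.reachable.trans (ih _ hw)
    have : Nonempty {x | π x y} := ⟨⟨y, π.refl' y⟩⟩
    refine ⟨fun ⟨u, hu⟩ ⟨v, hv⟩ => ?_⟩
    obtain ⟨p⟩ := h u v (π.trans' hu (π.symm' hv))
    exact hwalk p hu hv

lemma reachable_withinBlocks_mergeBlocks {r s : α} (hadj : G.Adj r s)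
    (h : ∀ u v, π u v → (withinBlocks G π).Reachable u v) (u v : α)
    (huv : mergeBlocks π r s u v) : (withinBlocks G (mergeBlocks π r s)).Reachable u v := by
  have hmono : ∀ {u v}, π u v → (withinBlocks G (mergeBlocks π r s)).Reachable u v :=
    fun huv => (h _ _ huv).mono (withinBlocks_mono (le_mergeBlocks π r s))
  have hrs : (withinBlocks G (mergeBlocks π r s)).Adj r s := ⟨hadj, mergeBlocks_rel π r s⟩
  have hr : ∀ {w}, π r w ∨ π s w → (withinBlocks G (mergeBlocks π r s)).Reachable r w :=
    fun hw => hw.elim hmono fun hs => hrs.reachable.trans (hmono hs)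
  obtain huv | ⟨hu, hv⟩ := huv
  · exact hmono huv
  · exact (hr hu).symm.trans (hr hv)

lemma exists_mem_adj_withinBlocks {R : Set α} (hR : IsTransversal π R) (hne : π ≠ ⊥)
    (h : ∀ u v, π u v → (withinBlocks G π).Reachable u v) :
    ∃ r ∈ R, ∃ s, (withinBlocks G π).Adj r s := by
  obtain ⟨a, b, hab, hne⟩ : ∃ a b, π a b ∧ a ≠ b := by
    by_contra! hbot
    exact hne (eq_bot_iff.2 fun a b => hbot a b)
  obtain ⟨r, ⟨hr, hra⟩, -⟩ := hR a
  obtain ⟨t, hrt, hne⟩ : ∃ t, π r t ∧ r ≠ t := by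
    by_cases hrb : r = b
    · exact ⟨a, hra, fun hra => hne (hra.symm.trans hrb)⟩
    · exact ⟨b, π.trans' hra hab, hrb⟩
  obtain ⟨p⟩ := h r t hrt
  exact ⟨r, hr, _, p.adj_snd (p.not_nil_of_ne hne)⟩

end WithinBlocks

section ForwardClosed

open Relation

variable {α : Type*} {o : α → α → Prop} {C : Set α} {u v : α}

/-- No arc of `o` leaves `C`. -/
def IsForwardClosed (o : α → α → Prop) (C : Set α) : Prop :=
  ∀ ⦃u v⦄, o u v → u ∈ C → v ∈ C

/-- The vertices at the end of a directed path of `o` from `s`. -/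
def reachSet (o : α → α → Prop) (s : α) : Set α :=
  {v | ReflTransGen o s v}

lemma isForwardClosed_reachSet (o : α → α → Prop) (s : α) : IsForwardClosed o (reachSet o s) :=
  fun _ _ huv hu => hu.tail huv

namespace IsForwardClosed

lemma mem_of_reflTransGen (hC : IsForwardClosed o C) (h : ReflTransGen o u v) (hu : u ∈ C) :
    v ∈ C := by
  induction h with
  | refl => exact hu
  | tail _ hvw ih => exact hC hvw ih

lemma transGen_inf_cutSetoid (hC : IsForwardClosed o C) (h : TransGen o u v)
    (huv : u ∈ C ↔ v ∈ C) : TransGen (o ⊓ cutSetoid C) u v := by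
  induction h with
  | single h => exact .single ⟨h, huv⟩
  | @tail v w huv' hvw ih =>
    have hside : u ∈ C ↔ v ∈ C :=
      ⟨hC.mem_of_reflTransGen huv'.to_reflTransGen, fun hv => huv.2 (hC hvw hv)⟩
    exact (ih hside).tail ⟨hvw, hside.symm.trans huv⟩

lemma reflTransGen_inf_cutSetoid (hC : IsForwardClosed o C) (h : ReflTransGen o u v)
    (huv : u ∈ C ↔ v ∈ C) : ReflTransGen (o ⊓ cutSetoid C) u v := by
  obtain rfl | h := reflTransGen_iff_eq_or_transGen.1 h
  · exact .refl
  · exact (hC.transGen_inf_cutSetoid h huv).to_reflTransGen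

end IsForwardClosed

end ForwardClosed

section Orientations

open Relation

variable {α : Type*} {H : SimpleGraph α} {R C : Set α} {r s : α} {o : α → α → Prop}

/-- `o` is an acyclic orientation of `H`. That no edge is oriented both ways follows from
acyclicity. -/
structure IsAcyclicOrientation (H : SimpleGraph α) (o : α → α → Prop) : Prop where
  adj {u v : α} : o u v → H.Adj u v
  total {u v : α} : H.Adj u v → o u v ∨ o v u
  acyclic (v : α) : ¬ TransGen o v v

/-- `o` is an acyclic orientation of `H` in which every vertex can be reached from `R`. -/
structure IsRootedOrientation (H : SimpleGraph α) (R : Set α) (o : α → α → Prop) : Prop extends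
    IsAcyclicOrientation H o where
  exists_root (v : α) : ∃ r ∈ R, ReflTransGen o r v

/-- The edges of `H` between `C` and its complement, oriented towards `C`. -/
def inwardArcs (H : SimpleGraph α) (C : Set α) : α → α → Prop :=
  fun u v => H.Adj u v ∧ u ∉ C ∧ v ∈ C

namespace IsAcyclicOrientation

lemma asymm (h : IsAcyclicOrientation H o) {u v : α} (huv : o u v) : ¬ o v u :=
  fun hvu => h.acyclic u (.tail (.single huv) hvu)

lemma reachable (h : IsAcyclicOrientation H o) {u v : α} (huv : ReflTransGen o u v) :
    H.Reachable u v :=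
  (H.reachable_iff_reflTransGen u v).2 (ReflTransGen.mono (fun _ _ => h.adj) u v huv)

lemma restrict (h : IsAcyclicOrientation H o) (τ : Setoid α) :
    IsAcyclicOrientation (withinBlocks H τ) (o ⊓ τ) where
  adj huv := ⟨h.adj huv.1, huv.2⟩
  total huv := (h.total huv.1).imp (⟨·, huv.2⟩) (⟨·, τ.symm' huv.2⟩)
  acyclic v hv := h.acyclic v (TransGen.mono inf_le_left v v hv)

lemma inf_cutSetoid_sup_inwardArcs (h : IsAcyclicOrientation H o) (hC : IsForwardClosed o C) :
    o ⊓ cutSetoid C ⊔ inwardArcs H C = o := by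
  funext u v
  refine propext ⟨?_, fun huv => ?_⟩
  · rintro (huv | ⟨hadj, hu, hv⟩)
    · exact huv.1
    · exact (h.total hadj).resolve_right fun hvu => hu (hC hvu hv)
  · by_cases hside : u ∈ C ↔ v ∈ C
    · exact .inl ⟨huv, hside⟩
    · have hu : u ∉ C := fun hu => hside (iff_of_true hu (hC huv hu))
      exact .inr ⟨h.adj huv, hu, by_contra fun hv => hside (iff_of_false hu hv)⟩

variable (h : IsAcyclicOrientation (withinBlocks H (cutSetoid C)) o)
include h

lemma isForwardClosed_sup_inwardArcs : IsForwardClosed (o ⊔ inwardArcs H C) C := by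
  rintro u v (huv | huv) hu
  · exact (h.adj huv).2.1 hu
  · exact huv.2.2

lemma sup_inwardArcs_inf_cutSetoid : (o ⊔ inwardArcs H C) ⊓ cutSetoid C = o := by
  funext u v
  refine propext ⟨?_, fun huv => ⟨.inl huv, (h.adj huv).2⟩⟩
  rintro ⟨huv | ⟨-, hu, hv⟩, hside⟩
  · exact huv
  · exact (hu (hside.2 hv)).elim

lemma sup_inwardArcs : IsAcyclicOrientation H (o ⊔ inwardArcs H C) where
  adj huv := huv.elim (fun huv => (h.adj huv).1) And.left
  total {u v} hadj := by
    by_cases hside : u ∈ C ↔ v ∈ C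
    · exact (h.total ⟨hadj, hside⟩).imp .inl .inl
    · by_cases hu : u ∈ C
      · exact .inr (.inr ⟨hadj.symm, fun hv => hside (iff_of_true hu hv), hu⟩)
      · exact .inl (.inr ⟨hadj, hu, by_contra fun hv => hside (iff_of_false hu hv)⟩)
  acyclic v hv := by
    have hcut := h.isForwardClosed_sup_inwardArcs.transGen_inf_cutSetoid hv Iff.rfl
    rw [h.sup_inwardArcs_inf_cutSetoid] at hcut
    exact h.acyclic v hcut

end IsAcyclicOrientation

namespace IsRootedOrientation

lemma restrict_reachSet (h : IsRootedOrientation H R o) (s : α) :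
    IsRootedOrientation (withinBlocks H (cutSetoid (reachSet o s))) (insert s R)
      (o ⊓ cutSetoid (reachSet o s)) where
  toIsAcyclicOrientation := h.toIsAcyclicOrientation.restrict _
  exists_root v := by
    have hclosed := isForwardClosed_reachSet o s
    by_cases hv : v ∈ reachSet o s
    · exact ⟨s, .inl rfl, hclosed.reflTransGen_inf_cutSetoid hv (iff_of_true .refl hv)⟩
    · obtain ⟨t, ht, htv⟩ := h.exists_root v
      have htC : t ∉ reachSet o s := mt (hclosed.mem_of_reflTransGen htv) hv
      exact ⟨t, .inr ht, hclosed.reflTransGen_inf_cutSetoid htv (iff_of_false htC hv)⟩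

lemma disjoint_reachSet (h : IsRootedOrientation H R o) (hs : s ∉ R)
    (hroot : ∀ t ∈ R, H.Reachable t s → t = r) : Disjoint (reachSet o s) R := by
  refine Set.disjoint_left.2 fun t hst ht => ?_
  obtain ⟨t', ht', hts⟩ := h.exists_root s
  have htt' : t = t' := (hroot t ht (h.reachable hst).symm).trans
    (hroot t' ht' (h.reachable hts)).symm
  subst htt'
  obtain rfl | hts := reflTransGen_iff_eq_or_transGen.1 hts
  · exact hs ht
  · exact h.acyclic t (hts.trans_left hst)

section Cut

variable (h : IsRootedOrientation (withinBlocks H (cutSetoid C)) (insert s R) o)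
include h

lemma sup_inwardArcs (hs : s ∈ C) (hr : r ∈ R) (hrC : r ∉ C) (hadj : H.Adj r s) :
    IsRootedOrientation H R (o ⊔ inwardArcs H C) where
  toIsAcyclicOrientation := h.toIsAcyclicOrientation.sup_inwardArcs
  exists_root v := by
    obtain ⟨t, ht, htv⟩ := h.exists_root v
    replace htv : ReflTransGen (o ⊔ inwardArcs H C) t v := ReflTransGen.mono le_sup_left t v htv
    obtain rfl | ht := ht
    · exact ⟨r, hr, .head (.inr ⟨hadj, hrC, hs⟩) htv⟩
    · exact ⟨t, ht, htv⟩

variable (hdisj : Disjoint C R)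
include hdisj

lemma reflTransGen_of_mem {v : α} (hv : v ∈ C) : ReflTransGen o s v := by
  obtain ⟨t, ht, htv⟩ := h.exists_root v
  have htC : t ∈ C := (rel_of_reachable_withinBlocks (h.reachable htv)).2 hv
  obtain rfl : t = s := ht.resolve_right (Set.disjoint_left.1 hdisj htC)
  exact htv

lemma reachSet_sup_inwardArcs (hs : s ∈ C) : reachSet (o ⊔ inwardArcs H C) s = C :=
  Set.Subset.antisymm
    (fun _ hv => h.isForwardClosed_sup_inwardArcs.mem_of_reflTransGen hv hs)
    fun v hv => ReflTransGen.mono le_sup_left s v (h.reflTransGen_of_mem hdisj hv)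

end Cut

lemma reachable_of_rel {G : SimpleGraph α} {π : Setoid α}
    (h : IsRootedOrientation (withinBlocks G π) R o) (hR : IsTransversal π R) (u v : α)
    (huv : π u v) : (withinBlocks G π).Reachable u v := by
  obtain ⟨t, ht, htu⟩ := h.exists_root u
  obtain ⟨t', ht', htv⟩ := h.exists_root v
  replace htu := h.reachable htu
  replace htv := h.reachable htv
  have hrel : π t t' := π.trans' (rel_of_reachable_withinBlocks htu)
    (π.trans' huv (π.symm' (rel_of_reachable_withinBlocks htv)))
  obtain rfl := hR.eq_of_rel ht ht' hrel
  exact htu.symm.trans htv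

end IsRootedOrientation

lemma isRootedOrientation_singleton_iff {i : α} :
    IsRootedOrientation H {i} o ↔
      (∀ u v, o u v → H.Adj u v) ∧ (∀ u v, H.Adj u v → (o u v ↔ ¬ o v u)) ∧
        (∀ v, ¬ TransGen o v v) ∧ ∀ j, ReflTransGen o i j := by
  constructor
  · refine fun h => ⟨fun _ _ => h.adj, fun _ _ hadj => ⟨h.asymm, (h.total hadj).resolve_right⟩,
      h.acyclic, fun j => ?_⟩
    obtain ⟨_, rfl, hj⟩ := h.exists_root j
    exact hj
  · rintro ⟨hadj, htotal, hacyclic, hroot⟩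
    exact
      { adj := hadj _ _
        total := fun huv => or_iff_not_imp_right.2 (htotal _ _ huv).2
        acyclic := hacyclic
        exists_root := fun v => ⟨i, rfl, hroot v⟩ }

end Orientations

section Counting

variable {H : SimpleGraph V} {R : Set V} {r s : V}

/-- The finite set of acyclic orientations of `H` in which every vertex can be reached from
`R`. -/
noncomputable def rootedOrientations (H : SimpleGraph V) (R : Set V) : Finset (V → V → Prop) :=
  {o | IsRootedOrientation H R o}

lemma mem_rootedOrientations {o : V → V → Prop} :
    o ∈ rootedOrientations H R ↔ IsRootedOrientation H R o := by
  simp only [rootedOrientations, mem_filter, mem_univ, true_and]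

lemma rootedOrientations_bot_univ : rootedOrientations (⊥ : SimpleGraph V) Set.univ = {⊥} := by
  ext o
  rw [mem_rootedOrientations, mem_singleton]
  constructor
  · exact fun h => eq_bot_iff.2 fun _ _ => h.adj
  · rintro rfl
    exact
      { adj := id
        total := False.elim
        acyclic := fun v hv => (Relation.TransGen.head'_iff.1 hv).elim fun _ hw => hw.1
        exists_root := fun v => ⟨v, trivial, .refl⟩ }

-- The set `C` collects the vertices reachable from `s`; the arcs entering it are determined by `C`.
theorem card_rootedOrientations_eq_sum_cut (hadj : H.Adj r s) (hr : r ∈ R) (hs : s ∉ R)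
    (hroot : ∀ t ∈ R, H.Reachable t s → t = r) :
    #(rootedOrientations H R) =
      ∑ C : Set V with s ∈ C ∧ Disjoint C R,
        #(rootedOrientations (withinBlocks H (cutSetoid C)) (insert s R)) := by
  rw [← card_sigma]
  symm
  refine card_bij (fun p _ => p.2 ⊔ inwardArcs H p.1) ?_ ?_ ?_ <;>
    simp only [mem_sigma, mem_filter, mem_univ, true_and, mem_rootedOrientations]
  · rintro ⟨C, o⟩ ⟨⟨hsC, hdisj⟩, ho⟩
    exact ho.sup_inwardArcs hsC hr (Set.disjoint_right.1 hdisj hr) hadj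
  · rintro ⟨C, o⟩ ⟨⟨hsC, hdisj⟩, ho⟩ ⟨C', o'⟩ ⟨⟨hsC', hdisj'⟩, ho'⟩ heq
    dsimp only at hsC hsC' hdisj hdisj' ho ho' heq
    obtain rfl : C = C' := by
      rw [← ho.reachSet_sup_inwardArcs hdisj hsC, heq, ho'.reachSet_sup_inwardArcs hdisj' hsC']
    rw [← ho.sup_inwardArcs_inf_cutSetoid, heq, ho'.sup_inwardArcs_inf_cutSetoid]
  · intro o ho
    exact ⟨⟨reachSet o s, o ⊓ cutSetoid (reachSet o s)⟩,
      ⟨⟨.refl, ho.disjoint_reachSet hs hroot⟩, ho.restrict_reachSet s⟩,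
      ho.inf_cutSetoid_sup_inwardArcs (isForwardClosed_reachSet o s)⟩

end Counting

namespace ConnPartition

section MergeClosure

variable {α : Type*} {G : SimpleGraph α} {r s : α}

lemma reachable (π : ConnPartition G) : ∀ u v, π.1 u v → (withinBlocks G π.1).Reachable u v :=
  forall_classes_induce_connected_iff.1 π.2

instance : OrderBot (ConnPartition G) where
  bot := ⟨⊥, forall_classes_induce_connected_iff.2 fun u _ huv => huv ▸ .refl u⟩
  bot_le π := (bot_le : ⊥ ≤ π.1)

/-- The greatest element of the lattice of connected partitions of a connected graph. -/
def oneBlock (hG : G.Connected) : ConnPartition G :=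
  ⟨⊤, forall_classes_induce_connected_iff.2 fun u v _ =>
    (withinBlocks_top G).symm ▸ hG.preconnected u v⟩

/-- The closure operator merging the blocks of two adjacent vertices `r` and `s`, that is, taking
the join with the atom of the edge `rs`. -/
def mergeClosure (hadj : G.Adj r s) : ClosureOperator (ConnPartition G) :=
  .ofPred
    (fun π => ⟨mergeBlocks π.1 r s, forall_classes_induce_connected_iff.2
      (reachable_withinBlocks_mergeBlocks hadj π.reachable)⟩)
    (fun π => π.1 r s) (fun π => le_mergeBlocks π.1 r s) (fun π => mergeBlocks_rel π.1 r s)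
    fun _ _ => mergeBlocks_le

lemma lt_and_mergeClosure_eq_iff (hadj : G.Adj r s) {π σ : ConnPartition G} :
    π < σ ∧ mergeClosure hadj π = σ ↔ mergeBlocks π.1 r s = σ.1 ∧ ¬ π.1 r s := by
  constructor
  · rintro ⟨hlt, rfl⟩
    exact ⟨rfl, fun hrs => hlt.ne' ((mergeClosure hadj).isClosed_iff.1 hrs)⟩
  · rintro ⟨hmerge, hrs⟩
    obtain rfl : mergeClosure hadj π = σ := Subtype.ext hmerge
    refine ⟨lt_of_le_of_ne ((mergeClosure hadj).le_closure π) fun heq => hrs ?_, rfl⟩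
    exact (mergeClosure hadj).isClosed_iff.2 heq.symm

lemma exists_eq_inf_cutSetoid {σ : ConnPartition G} {R C : Set α} {o : α → α → Prop}
    (hR : IsTransversal σ.1 R) (hr : r ∈ R) (hrs : σ.1 r s) (hs : s ∈ C) (hdisj : Disjoint C R)
    (ho : IsRootedOrientation (withinBlocks (withinBlocks G σ.1) (cutSetoid C)) (insert s R) o) :
    ∃ π : ConnPartition G, π.1 = σ.1 ⊓ cutSetoid C ∧ mergeBlocks π.1 r s = σ.1 ∧ ¬ π.1 r s ∧
      {v | π.1 s v} = C := by
  have hrC : r ∉ C := Set.disjoint_right.1 hdisj hr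
  have hreach : ∀ v ∈ C, Relation.ReflTransGen o s v := fun _ => ho.reflTransGen_of_mem hdisj
  rw [withinBlocks_withinBlocks] at ho
  have hC : ∀ v ∈ C, (σ.1 ⊓ cutSetoid C) s v := fun v hv =>
    rel_of_reachable_withinBlocks (ho.reachable (hreach v hv))
  have hmerge : mergeBlocks (σ.1 ⊓ cutSetoid C) r s = σ.1 :=
    mergeBlocks_of_inf_cutSetoid hrs hs hrC fun v hv => (hC v hv).1
  have hcut : ¬ (σ.1 ⊓ cutSetoid C) r s := fun h => hrC (h.2.2 hs)
  have htransversal : IsTransversal (σ.1 ⊓ cutSetoid C) (insert s R) :=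
    IsTransversal.insert_of_mergeBlocks (hmerge.symm ▸ hR) hr hcut
  exact ⟨⟨_, forall_classes_induce_connected_iff.2 (ho.reachable_of_rel htransversal)⟩, rfl,
    hmerge, hcut, Set.Subset.antisymm (fun v hv => hv.2.1 hs) hC⟩

end MergeClosure

variable {G : SimpleGraph V} {r s : V} {R : Set V}

theorem sum_cut_eq_sum_mergeClosure {σ : ConnPartition G} (hR : IsTransversal σ.1 R) (hr : r ∈ R)
    (hadj : G.Adj r s) (hrs : σ.1 r s) :
    ∑ C : Set V with s ∈ C ∧ Disjoint C R,
        #(rootedOrientations (withinBlocks (withinBlocks G σ.1) (cutSetoid C)) (insert s R)) =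
      ∑ π ∈ Ico ⊥ σ with mergeClosure hadj π = σ,
        #(rootedOrientations (withinBlocks G π.1) (insert s R)) := by
  have hmem : ∀ {π}, π ∈ ({π ∈ Ico ⊥ σ | mergeClosure hadj π = σ} : Finset _) ↔
      mergeBlocks π.1 r s = σ.1 ∧ ¬ π.1 r s := by
    simp only [mem_filter, mem_Ico, bot_le, true_and, lt_and_mergeClosure_eq_iff, implies_true]
  have hinf : ∀ {π : ConnPartition G}, mergeBlocks π.1 r s = σ.1 →
      σ.1 ⊓ cutSetoid {v | π.1 s v} = π.1 := fun hmerge =>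
    hmerge ▸ mergeBlocks_inf_cutSetoid _ r s
  symm
  refine sum_bij_ne_zero (fun π _ _ => {v | π.1 s v}) ?_ ?_ ?_ ?_
  · intro π hπ _
    obtain ⟨hmerge, hrs'⟩ := hmem.1 hπ
    refine mem_filter.2 ⟨mem_univ _, π.1.refl' s, Set.disjoint_left.2 fun t hst ht => hrs' ?_⟩
    have hrt : σ.1 r t := σ.1.trans' hrs (hmerge ▸ le_mergeBlocks π.1 r s hst)
    exact hR.eq_of_rel hr ht hrt ▸ π.1.symm' hst
  · intro π hπ _ π' hπ' _ heq
    refine Subtype.ext ?_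
    rw [← hinf (hmem.1 hπ).1, heq, hinf (hmem.1 hπ').1]
  · intro C hC hne
    obtain ⟨hs, hdisj⟩ := (mem_filter.1 hC).2
    obtain ⟨o, ho⟩ := card_ne_zero.1 hne
    rw [mem_rootedOrientations] at ho
    obtain ⟨π, hπ, hmerge, hrs', hblock⟩ := exists_eq_inf_cutSetoid hR hr hrs hs hdisj ho
    refine ⟨π, hmem.2 ⟨hmerge, hrs'⟩, ?_, hblock⟩
    rwa [hπ, ← withinBlocks_withinBlocks]
  · intro π hπ _
    rw [withinBlocks_withinBlocks, hinf (hmem.1 hπ).1]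

theorem card_rootedOrientations_eq_sum_mergeClosure {σ : ConnPartition G}
    (hR : IsTransversal σ.1 R) (hr : r ∈ R) (hadj : G.Adj r s) (hrs : σ.1 r s) :
    #(rootedOrientations (withinBlocks G σ.1) R) =
      ∑ π ∈ Ico ⊥ σ with mergeClosure hadj π = σ,
        #(rootedOrientations (withinBlocks G π.1) (insert s R)) := by
  have hadj' : (withinBlocks G σ.1).Adj r s := ⟨hadj, hrs⟩
  have hs : s ∉ R := fun hs => hadj.ne (hR.eq_of_rel hr hs hrs)
  have hroot : ∀ t ∈ R, (withinBlocks G σ.1).Reachable t s → t = r := fun t ht hts =>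
    hR.eq_of_rel ht hr (σ.1.trans' (rel_of_reachable_withinBlocks hts) (σ.1.symm' hrs))
  rw [card_rootedOrientations_eq_sum_cut hadj' hr hs hroot,
    sum_cut_eq_sum_mergeClosure hR hr hadj hrs]

theorem mu_bot_eq_card_rootedOrientations (σ : ConnPartition G) (hR : IsTransversal σ.1 R) :
    IncidenceAlgebra.mu ℤ ⊥ σ =
      (-1) ^ Rᶜ.ncard * #(rootedOrientations (withinBlocks G σ.1) R) := by
  induction σ using WellFoundedLT.induction generalizing R with
  | ind σ ih =>
    obtain rfl | hne := eq_or_ne σ ⊥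
    · obtain rfl := IsTransversal.eq_univ_of_bot hR
      have hcard : #(rootedOrientations (withinBlocks G ⊥) Set.univ) = 1 := by
        rw [withinBlocks_bot, rootedOrientations_bot_univ, card_singleton]
      rw [IncidenceAlgebra.mu_self, Set.compl_univ, Set.ncard_empty, pow_zero, one_mul]
      exact_mod_cast hcard.symm
    obtain ⟨r, hr, s, hadj, hrs⟩ := exists_mem_adj_withinBlocks hR
      (fun h => hne (Subtype.ext h)) σ.reachable
    have hs : s ∉ R := fun hs => hadj.ne (hR.eq_of_rel hr hs hrs)
    have hcompl : (insert s R)ᶜ.ncard + 1 = Rᶜ.ncard := by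
      rw [Set.insert_eq, Set.compl_union, Set.inter_comm, ← Set.sdiff_eq]
      exact Set.ncard_sdiff_singleton_add_one hs
    have hmu : ∀ π ∈ ({π ∈ Ico ⊥ σ | mergeClosure hadj π = σ} : Finset _),
        IncidenceAlgebra.mu ℤ ⊥ π = (-1) ^ (insert s R)ᶜ.ncard *
          #(rootedOrientations (withinBlocks G π.1) (insert s R)) := by
      intro π hπ
      obtain ⟨hπ, hclosure⟩ := mem_filter.1 hπ
      have hlt := (mem_Ico.1 hπ).2
      obtain ⟨hmerge, hrs'⟩ := (lt_and_mergeClosure_eq_iff hadj).1 ⟨hlt, hclosure⟩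
      exact ih π hlt (IsTransversal.insert_of_mergeBlocks (hmerge ▸ hR) hr hrs')
    have hbot : ¬ (mergeClosure hadj).IsClosed ⊥ := hadj.ne
    calc IncidenceAlgebra.mu ℤ ⊥ σ
        = -∑ π ∈ Ico ⊥ σ with mergeClosure hadj π = σ, IncidenceAlgebra.mu ℤ ⊥ π :=
          mu_eq_neg_sum_filter_closure _ hbot hrs bot_le
      _ = -((-1) ^ (insert s R)ᶜ.ncard * #(rootedOrientations (withinBlocks G σ.1) R)) := by
          rw [sum_congr rfl hmu, ← mul_sum, ← Nat.cast_sum,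
            ← card_rootedOrientations_eq_sum_mergeClosure hR hr hadj hrs]
      _ = (-1) ^ Rᶜ.ncard * #(rootedOrientations (withinBlocks G σ.1) R) := by
          rw [← hcompl, pow_succ, mul_neg_one, neg_mul]

end ConnPartition

-- `mobiusInvariant` uses `IncidenceAlgebra.mu` on the subtype underlying `ConnPartition G`, for
-- which instance search finds another `LocallyFiniteOrder`.
lemma mobiusInvariant_eq_abs_mu_oneBlock {G : SimpleGraph V} (hG : G.Connected) :
    mobiusInvariant G = |IncidenceAlgebra.mu ℤ ⊥ (ConnPartition.oneBlock hG)| := by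
  rw [mobiusInvariant, dif_pos ⟨(⊥ : ConnPartition G).2, (ConnPartition.oneBlock hG).2⟩]
  unfold ConnPartition.oneBlock ConnPartition
  congr! 3
  exact Subsingleton.elim _ _

/-- for a finite connected simple graph `G` and a fixed vertex `i`, the Möbius
invariant `μ(G)` equals the number of acyclic orientations of `G` in which every vertex is
reachable from `i` by a directed path. -/
theorem mobiusInvariant_eq_card_acyclic_orientations (G : SimpleGraph V) (hG : G.Connected)
    (i : V) :
    mobiusInvariant G =
      (Nat.card {o : V → V → Prop //
        (∀ u v, o u v → G.Adj u v) ∧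
        (∀ u v, G.Adj u v → (o u v ↔ ¬ o v u)) ∧
        (∀ v, ¬ Relation.TransGen o v v) ∧
        (∀ j, Relation.ReflTransGen o i j)} : ℤ) := by
  have hmu : IncidenceAlgebra.mu ℤ ⊥ (ConnPartition.oneBlock hG) =
      (-1) ^ ({i} : Set V)ᶜ.ncard * #(rootedOrientations G {i}) := by
    rw [ConnPartition.mu_bot_eq_card_rootedOrientations _ (.top_singleton i),
      ConnPartition.oneBlock, withinBlocks_top]
  rw [mobiusInvariant_eq_abs_mu_oneBlock hG, hmu, abs_mul, abs_neg_one_pow, one_mul, Nat.abs_cast]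
  simp only [← isRootedOrientation_singleton_iff, ← mem_rootedOrientations,
    Nat.card_eq_fintype_card, Fintype.card_coe]
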